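/- The interaction improvement ⊑int·imp on ordinary λ-terms is a consistent inequational λ-theory (a compatible preorder containing β-conversion, different from the total relation). -/

import Mathlib

set_option autoImplicit false

/-! ### Players -/

inductive Player : Type
  | white
  | black
deriving DecidableEq

/-- The opposite player. -/
def Player.op : Player → Player
  | .white => .black
  | .black => .white

/-- `gamma p q` is `0` if the players agree (silent) and `1` otherwise (interaction). -/
def Player.gamma (p q : Player) : ℕ := if p = q then 0 else 1

/-! ### Ordinary λ-terms (de Bruijn representation) -/

inductive Lam : Type
  | var : ℕ → Lam
  | lam : Lam → Lam
  | app : Lam → Lam → Lam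
deriving DecidableEq

namespace Lam

/-- Shift the free de Bruijn indices ≥ `d` by one. -/
def liftAt : Lam → ℕ → Lam
  | .var n, d => .var (if n < d then n else n + 1)
  | .lam t, d => .lam (t.liftAt (d + 1))
  | .app t u, d => .app (t.liftAt d) (u.liftAt d)

/-- Capture-avoiding substitution of `u` for the de Bruijn index `x`. -/
def subst : Lam → ℕ → Lam → Lam
  | .var n, x, u => if n = x then u else if x < n then .var (n - 1) else .var n
  | .lam t, x, u => .lam (t.subst (x + 1) (u.liftAt 0))
  | .app t s, x, u => .app (t.subst x u) (s.subst x u)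

end Lam

/-- Root β-rule: `(λx.t) u ↦ t[x:=u]`. -/
inductive LBetaRoot : Lam → Lam → Prop
  | beta (t u : Lam) : LBetaRoot (.app (.lam t) u) (t.subst 0 u)

/-- Root η-rule: `λx. t x ↦ t` with `x ∉ FV(t)` (enforced by the lifting). -/
inductive LEtaRoot : Lam → Lam → Prop
  | eta (t : Lam) : LEtaRoot (.lam (.app (t.liftAt 0) (.var 0))) t

/-- Closure of a root relation under all contexts. -/
inductive LFull (R : Lam → Lam → Prop) : Lam → Lam → Prop
  | root {t u : Lam} : R t u → LFull R t u
  | lam {t u : Lam} : LFull R t u → LFull R (.lam t) (.lam u)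
  | appL {t t' : Lam} (u : Lam) : LFull R t t' → LFull R (.app t u) (.app t' u)
  | appR (t : Lam) {u u' : Lam} : LFull R u u' → LFull R (.app t u) (.app t u')

/-- Closure under applicative spine contexts `⟨·⟩ t1 … tk`. -/
inductive LSpine (R : Lam → Lam → Prop) : Lam → Lam → Prop
  | root {t u : Lam} : R t u → LSpine R t u
  | appL {t t' : Lam} (u : Lam) : LSpine R t t' → LSpine R (.app t u) (.app t' u)

/-- Closure under head contexts `λx1…xn.⟨·⟩ t1 … tk`. -/
inductive LHead (R : Lam → Lam → Prop) : Lam → Lam → Prop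
  | spine {t u : Lam} : LSpine R t u → LHead R t u
  | lam {t u : Lam} : LHead R t u → LHead R (.lam t) (.lam u)

/-- β-reduction. -/
def LBeta : Lam → Lam → Prop := LFull LBetaRoot
/-- η-reduction. -/
def LEta : Lam → Lam → Prop := LFull LEtaRoot
/-- Head reduction. -/
def LHStep : Lam → Lam → Prop := LHead LBetaRoot
/-- Multistep head reduction. -/
def LHSteps : Lam → Lam → Prop := Relation.ReflTransGen LHStep

/-- β-conversion (reflexive-symmetric-transitive closure of β-reduction). -/
def LBetaConv : Lam → Lam → Prop :=
  Relation.ReflTransGen (fun a b => LBeta a b ∨ LBeta b a)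
/-- η-conversion. -/
def LEtaConv : Lam → Lam → Prop :=
  Relation.ReflTransGen (fun a b => LEta a b ∨ LEta b a)

/-- Head normal forms: no head step out of `t`. -/
def Lam.LHNF (t : Lam) : Prop := ∀ u, ¬ LHStep t u

/-- Head convergence: `t ⇓h`. -/
def Lam.HConv (t : Lam) : Prop := ∃ h, LHSteps t h ∧ h.LHNF

/-- Ordinary contexts (one hole). -/
inductive LCtx : Type
  | hole : LCtx
  | lam : LCtx → LCtx
  | appL : LCtx → Lam → LCtx
  | appR : Lam → LCtx → LCtx

/-- Plugging (allowing variable capture). -/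
def LCtx.fill : LCtx → Lam → Lam
  | .hole, t => t
  | .lam C, t => .lam (C.fill t)
  | .appL C u, t => .app (C.fill t) u
  | .appR s C, t => .app s (C.fill t)

/-- Head contextual preorder on λ-terms. -/
def CtxLe (t u : Lam) : Prop := ∀ C : LCtx, (C.fill t).HConv → (C.fill u).HConv

/-! ### Checkers terms -/

inductive CTerm : Type
  | var : ℕ → CTerm
  | lam : Player → CTerm → CTerm
  | app : Player → CTerm → CTerm → CTerm
deriving DecidableEq

namespace CTerm

/-- Shift the free de Bruijn indices ≥ `d` by one. -/
def liftAt : CTerm → ℕ → CTerm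
  | .var n, d => .var (if n < d then n else n + 1)
  | .lam p t, d => .lam p (t.liftAt (d + 1))
  | .app p t u, d => .app p (t.liftAt d) (u.liftAt d)

/-- Capture-avoiding substitution of `u` for the de Bruijn index `x`. -/
def subst : CTerm → ℕ → CTerm → CTerm
  | .var n, x, u => if n = x then u else if x < n then .var (n - 1) else .var n
  | .lam p t, x, u => .lam p (t.subst (x + 1) (u.liftAt 0))
  | .app p t s, x, u => .app p (t.subst x u) (s.subst x u)

/-- The underlying ordinary λ-term of a checkers term. -/
def untag : CTerm → Lam
  | .var n => .var n
  | .lam _ t => .lam t.untag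
  | .app _ t u => .app t.untag u.untag

end CTerm

/-- Player lifting: tag every abstraction and application with player `p`. -/
def Lam.tag : Lam → Player → CTerm
  | .var n, _ => .var n
  | .lam t, p => .lam p (t.tag p)
  | .app t u, p => .app p (t.tag p) (u.tag p)

/-- Silent β root rule: the abstraction and the application carry the same player. -/
inductive SilentRoot : CTerm → CTerm → Prop
  | beta (p : Player) (t u : CTerm) : SilentRoot (.app p (.lam p t) u) (t.subst 0 u)

/-- Interaction β root rule: the application carries the opposite player of the abstraction. -/
inductive InterRoot : CTerm → CTerm → Prop
  | beta (p : Player) (t u : CTerm) : InterRoot (.app p.op (.lam p t) u) (t.subst 0 u)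

/-- Closure of a root relation under all checkers contexts. -/
inductive CFull (R : CTerm → CTerm → Prop) : CTerm → CTerm → Prop
  | root {t u : CTerm} : R t u → CFull R t u
  | lam (p : Player) {t u : CTerm} : CFull R t u → CFull R (.lam p t) (.lam p u)
  | appL (p : Player) {t t' : CTerm} (u : CTerm) : CFull R t t' → CFull R (.app p t u) (.app p t' u)
  | appR (p : Player) (t : CTerm) {u u' : CTerm} : CFull R u u' → CFull R (.app p t u) (.app p t u')

/-- Closure under applicative spine contexts `⟨·⟩ @_{q1} t1 … @_{qk} tk`. -/
inductive CSpine (R : CTerm → CTerm → Prop) : CTerm → CTerm → Prop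
  | root {t u : CTerm} : R t u → CSpine R t u
  | appL (p : Player) {t t' : CTerm} (u : CTerm) : CSpine R t t' → CSpine R (.app p t u) (.app p t' u)

/-- Closure under checkers head contexts `λ_{p1}x1…λ_{pn}xn.⟨·⟩ @_{q1} t1 … @_{qk} tk`. -/
inductive CHead (R : CTerm → CTerm → Prop) : CTerm → CTerm → Prop
  | spine {t u : CTerm} : CSpine R t u → CHead R t u
  | lam (p : Player) {t u : CTerm} : CHead R t u → CHead R (.lam p t) (.lam p u)

/-- Silent β-reduction `→τ`. -/
def StepTau : CTerm → CTerm → Prop := CFull SilentRoot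
/-- Interaction β-reduction `→⊛`. -/
def StepInt : CTerm → CTerm → Prop := CFull InterRoot
/-- Checkers β-reduction `→βch`. -/
def StepBch (t u : CTerm) : Prop := StepTau t u ∨ StepInt t u

/-- Silent head reduction `→hτ`. -/
def HStepTau : CTerm → CTerm → Prop := CHead SilentRoot
/-- Interaction head reduction `→h⊛`. -/
def HStepInt : CTerm → CTerm → Prop := CHead InterRoot
/-- Checkers head reduction `→hch`. -/
def HStepCh (t u : CTerm) : Prop := HStepTau t u ∨ HStepInt t u

/-- Checkers head normal form. -/
def CTerm.HNF (t : CTerm) : Prop := ∀ u, ¬ HStepCh t u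

/-- `BigStep t k` means `t ⇓^k`: the (deterministic) checkers head evaluation of `t`
terminates and performs exactly `k` interaction steps. -/
inductive BigStep : CTerm → ℕ → Prop
  | nf {t : CTerm} : t.HNF → BigStep t 0
  | silent {t u : CTerm} {k : ℕ} : HStepTau t u → BigStep u k → BigStep t k
  | inter {t u : CTerm} {k : ℕ} : HStepInt t u → BigStep u k → BigStep t (k + 1)

/-- `HRed t n i u`: a checkers head reduction sequence from `t` to `u` of length `n`
containing exactly `i` interaction steps. -/
inductive HRed : CTerm → ℕ → ℕ → CTerm → Prop
  | refl (t : CTerm) : HRed t 0 0 t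
  | silent {t u s : CTerm} {n i : ℕ} : HStepTau t u → HRed u n i s → HRed t (n + 1) i s
  | inter {t u s : CTerm} {n i : ℕ} : HStepInt t u → HRed u n i s → HRed t (n + 1) (i + 1) s

/-- Checkers contexts (one hole). -/
inductive CCtx : Type
  | hole : CCtx
  | lam : Player → CCtx → CCtx
  | appL : Player → CCtx → CTerm → CCtx
  | appR : Player → CTerm → CCtx → CCtx

/-- Plugging (allowing variable capture). -/
def CCtx.fill : CCtx → CTerm → CTerm
  | .hole, t => t
  | .lam p C, t => .lam p (C.fill t)
  | .appL p C u, t => .app p (C.fill t) u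
  | .appR p s C, t => .app p s (C.fill t)

/-- Player lifting of ordinary contexts. -/
def LCtx.tag : LCtx → Player → CCtx
  | .hole, _ => .hole
  | .lam C, p => .lam p (C.tag p)
  | .appL C u, p => .appL p (C.tag p) (u.tag p)
  | .appR s C, p => .appR p (s.tag p) (C.tag p)

/-- Checkers interaction preorder `≼ctx⊛` on checkers terms. -/
def IntCtxLe (t u : CTerm) : Prop :=
  ∀ (C : CCtx) (k : ℕ), BigStep (C.fill t) k → BigStep (C.fill u) k

/-- Checkers interaction improvement `≼imp⊛` on checkers terms. -/
def ImpCtxLe (t u : CTerm) : Prop :=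
  ∀ (C : CCtx) (k : ℕ), BigStep (C.fill t) k → ∃ k', k' ≤ k ∧ BigStep (C.fill u) k'

/-- Interaction preorder `⊑int` on ordinary λ-terms, via black lifting. -/
def IntLe (t u : Lam) : Prop := IntCtxLe (t.tag .black) (u.tag .black)

/-- Interaction improvement `⊑int·imp` on ordinary λ-terms, via black lifting. -/
def ImpLe (t u : Lam) : Prop := ImpCtxLe (t.tag .black) (u.tag .black)

/-- Interaction equivalence `≡int`. -/
def IntEq (t u : Lam) : Prop := IntLe t u ∧ IntLe u t

/-- Silent conversion `=τ`: reflexive-symmetric-transitive closure of `→τ`. -/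
def SilentConv : CTerm → CTerm → Prop :=
  Relation.ReflTransGen (fun a b => StepTau a b ∨ StepTau b a)

/-!
A silent β-step keeps the label of every other redex, so it can be pushed behind the head steps.
Kashima's inductive presentation of standard reduction makes this precise: a term `t` that reduces
silently to `u` in this sense first performs silent head steps, and then either both terms are
head normal or both fire their head redex, with the same label, and land in related terms again.
Since head reduction is deterministic, `t` and `u` therefore have the same evaluation cost in
every context. The player lifting of a β-step is a silent step, so it lies in `⊑int·imp` in both
directions. Consistency holds because `Ω` diverges.
-/

/-! ### Substitution lemmas -/

namespace CTerm

theorem liftAt_liftAt (t : CTerm) {i j : ℕ} (h : i ≤ j) :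
    (t.liftAt i).liftAt (j + 1) = (t.liftAt j).liftAt i := by
  induction t generalizing i j with
  | var n => grind [liftAt]
  | lam p t ih => simp only [liftAt, ih (Nat.succ_le_succ h)]
  | app p t s iht ihs => simp only [liftAt, iht h, ihs h]

theorem liftAt_subst_of_ge (t u : CTerm) {x d : ℕ} (h : x ≤ d) :
    (t.subst x u).liftAt d = (t.liftAt (d + 1)).subst x (u.liftAt d) := by
  induction t generalizing x d u with
  | var n => grind [liftAt, subst]
  | lam p t ih =>
    simp only [liftAt, subst, ih _ (Nat.succ_le_succ h), liftAt_liftAt u d.zero_le]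
  | app p t s iht ihs => simp only [liftAt, subst, iht _ h, ihs _ h]

theorem liftAt_subst_of_le (t u : CTerm) {x d : ℕ} (h : d ≤ x) :
    (t.subst x u).liftAt d = (t.liftAt d).subst (x + 1) (u.liftAt d) := by
  induction t generalizing x d u with
  | var n => grind [liftAt, subst]
  | lam p t ih =>
    simp only [liftAt, subst, ih _ (Nat.succ_le_succ h), liftAt_liftAt u d.zero_le]
  | app p t s iht ihs => simp only [liftAt, subst, iht _ h, ihs _ h]

theorem subst_liftAt (t u : CTerm) (x : ℕ) : (t.liftAt x).subst x u = t := by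
  induction t generalizing x u with
  | var n => grind [liftAt, subst]
  | lam p t ih => simp only [liftAt, subst, ih]
  | app p t s iht ihs => simp only [liftAt, subst, iht, ihs]

theorem subst_subst (t s u : CTerm) {x y : ℕ} (h : x ≤ y) :
    (t.subst x s).subst y u = (t.subst (y + 1) (u.liftAt x)).subst x (s.subst y u) := by
  induction t generalizing x y s u with
  | var n => grind [subst, subst_liftAt]
  | lam p t ih =>
    simp only [subst, ih _ _ (Nat.succ_le_succ h), liftAt_liftAt u x.zero_le,
      liftAt_subst_of_le s u y.zero_le]
  | app p t r iht ihr => simp only [subst, iht _ _ h, ihr _ _ h]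

end CTerm

/-! ### Player lifting and contexts -/

theorem Lam.tag_liftAt (t : Lam) (p : Player) (d : ℕ) :
    (t.liftAt d).tag p = (t.tag p).liftAt d := by
  induction t generalizing d with
  | var n => rfl
  | lam t ih => simp only [Lam.liftAt, Lam.tag, CTerm.liftAt, ih]
  | app t u iht ihu => simp only [Lam.liftAt, Lam.tag, CTerm.liftAt, iht, ihu]

theorem Lam.tag_subst (t u : Lam) (p : Player) (x : ℕ) :
    (t.subst x u).tag p = (t.tag p).subst x (u.tag p) := by
  induction t generalizing x u with
  | var n =>
    simp only [Lam.subst, Lam.tag, CTerm.subst]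
    split_ifs <;> rfl
  | lam t ih => simp only [Lam.subst, Lam.tag, CTerm.subst, ih, Lam.tag_liftAt]
  | app t s iht ihs => simp only [Lam.subst, Lam.tag, CTerm.subst, iht, ihs]

theorem LCtx.tag_fill (C : LCtx) (t : Lam) (p : Player) :
    (C.fill t).tag p = (C.tag p).fill (t.tag p) := by
  induction C with
  | hole => rfl
  | lam C ih => simp only [LCtx.fill, LCtx.tag, Lam.tag, CCtx.fill, ih]
  | appL C u ih => simp only [LCtx.fill, LCtx.tag, Lam.tag, CCtx.fill, ih]
  | appR s C ih => simp only [LCtx.fill, LCtx.tag, Lam.tag, CCtx.fill, ih]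

/-- Composition of checkers contexts: `C.comp D` is `C⟨D⟩`. -/
def CCtx.comp : CCtx → CCtx → CCtx
  | .hole, D => D
  | .lam p C, D => .lam p (C.comp D)
  | .appL p C u, D => .appL p (C.comp D) u
  | .appR p s C, D => .appR p s (C.comp D)

theorem CCtx.comp_fill (C D : CCtx) (t : CTerm) : (C.comp D).fill t = C.fill (D.fill t) := by
  induction C with
  | hole => rfl
  | lam p C ih => simp only [CCtx.comp, CCtx.fill, ih]
  | appL p C u ih => simp only [CCtx.comp, CCtx.fill, ih]
  | appR p s C ih => simp only [CCtx.comp, CCtx.fill, ih]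

theorem CFull.fill {R : CTerm → CTerm → Prop} {t u : CTerm} (h : CFull R t u) (C : CCtx) :
    CFull R (C.fill t) (C.fill u) := by
  induction C with
  | hole => exact h
  | lam p C ih => exact .lam p ih
  | appL p C s ih => exact .appL p s ih
  | appR p s C ih => exact .appR p s ih

theorem LBeta.stepTau_tag {t u : Lam} (h : LBeta t u) (p : Player) :
    StepTau (t.tag p) (u.tag p) := by
  unfold LBeta at h
  induction h with
  | root h =>
    obtain ⟨t, u⟩ := h
    rw [Lam.tag_subst]
    exact .root (.beta p _ _)
  | lam _ ih => exact .lam p ih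
  | appL u _ ih => exact .appL p _ ih
  | appR t _ ih => exact .appR p _ ih

theorem LBetaConv.silentConv_tag {t u : Lam} (h : LBetaConv t u) (p : Player) :
    SilentConv (t.tag p) (u.tag p) :=
  Relation.ReflTransGen.lift (Lam.tag · p)
    (fun _ _ => Or.imp (LBeta.stepTau_tag · p) (LBeta.stepTau_tag · p)) _ _ h

/-! ### Determinism of head reduction -/

/-- The root rules of checkers reduction as one family, indexed by whether the step is an
interaction, so that silent and interaction steps can be treated uniformly. The cost of a step
is `Bool.toNat` of its index. -/
def BetaRoot : Bool → CTerm → CTerm → Prop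
  | false => SilentRoot
  | true => InterRoot

theorem betaRoot_iff {b : Bool} {t u : CTerm} :
    BetaRoot b t u ↔ ∃ p q s r,
      b = decide (p ≠ q) ∧ t = .app q (.lam p s) r ∧ u = s.subst 0 r := by
  constructor
  · intro h
    cases b with
    | false =>
      obtain ⟨p, s, r⟩ := h
      exact ⟨p, p, s, r, by simp, rfl, rfl⟩
    | true =>
      obtain ⟨p, s, r⟩ := h
      exact ⟨p, p.op, s, r, by cases p <;> rfl, rfl, rfl⟩
  · rintro ⟨p, q, s, r, rfl, rfl, rfl⟩
    cases p <;> cases q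
    exacts [SilentRoot.beta _ s r, InterRoot.beta .white s r, InterRoot.beta .black s r,
      SilentRoot.beta _ s r]

theorem BetaRoot.exists_eq_lam {b : Bool} {q : Player} {t r u : CTerm}
    (h : BetaRoot b (.app q t r) u) : ∃ p s, t = .lam p s := by
  obtain ⟨p, _, s, _, _, hredex, _⟩ := betaRoot_iff.1 h
  cases hredex
  exact ⟨p, s, rfl⟩

section Determinism

variable {b b' : Bool} {p : Player} {t u u' : CTerm}

theorem not_cSpine_lam : ¬ CSpine (BetaRoot b) (.lam p t) u := by
  rintro (h | _)
  obtain ⟨_, _, _, _, _, h, _⟩ := betaRoot_iff.1 h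
  cases h

theorem BetaRoot.deterministic (h : BetaRoot b t u) (h' : BetaRoot b' t u') :
    b = b' ∧ u = u' := by
  obtain ⟨p, q, s, r, rfl, rfl, rfl⟩ := betaRoot_iff.1 h
  obtain ⟨_, _, _, _, rfl, hredex, rfl⟩ := betaRoot_iff.1 h'
  cases hredex
  exact ⟨rfl, rfl⟩

theorem CSpine.deterministic (h : CSpine (BetaRoot b) t u) (h' : CSpine (BetaRoot b') t u') :
    b = b' ∧ u = u' := by
  induction h generalizing u' with
  | root h =>
    cases h' with
    | root h' => exact h.deterministic h'
    | appL q r h' =>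
      obtain ⟨_, _, rfl⟩ := h.exists_eq_lam
      exact absurd h' not_cSpine_lam
  | appL q r h ih =>
    cases h' with
    | root h' =>
      obtain ⟨_, _, rfl⟩ := h'.exists_eq_lam
      exact absurd h not_cSpine_lam
    | appL _ _ h' =>
      obtain ⟨rfl, rfl⟩ := ih h'
      exact ⟨rfl, rfl⟩

theorem CHead.deterministic (h : CHead (BetaRoot b) t u) (h' : CHead (BetaRoot b') t u') :
    b = b' ∧ u = u' := by
  induction h generalizing u' with
  | spine h =>
    cases h' with
    | spine h' => exact h.deterministic h'
    | lam => exact absurd h not_cSpine_lam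
  | lam p _ ih =>
    cases h' with
    | spine h' => exact absurd h' not_cSpine_lam
    | lam _ h' =>
      obtain ⟨rfl, rfl⟩ := ih h'
      exact ⟨rfl, rfl⟩

end Determinism

/-! ### Head normal forms and evaluation -/

theorem CTerm.hnf_iff {t : CTerm} : t.HNF ↔ ∀ b u, ¬ CHead (BetaRoot b) t u := by
  simp only [CTerm.HNF, HStepCh, HStepTau, HStepInt, Bool.forall_bool, BetaRoot, not_or,
    forall_and]

theorem CTerm.HNF.lam {t : CTerm} (h : t.HNF) (p : Player) : (CTerm.lam p t).HNF := by
  rw [CTerm.hnf_iff] at h ⊢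
  rintro b _ (hspine | ⟨_, hbody⟩)
  · exact not_cSpine_lam hspine
  · exact h b _ hbody

/-- Neutral terms `x @_{q1} t1 … @_{qk} tk`, the terms headed by a variable. -/
inductive Neutral : CTerm → Prop
  | var (n : ℕ) : Neutral (.var n)
  | app {t : CTerm} (p : Player) (u : CTerm) : Neutral t → Neutral (.app p t u)

theorem Neutral.not_cSpine {b : Bool} {t u : CTerm} (h : Neutral t) :
    ¬ CSpine (BetaRoot b) t u := by
  induction h generalizing u with
  | var n =>
    rintro (h | _)
    obtain ⟨_, _, _, _, _, h, _⟩ := betaRoot_iff.1 h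
    cases h
  | app p r h ih =>
    rintro (hroot | ⟨_, _, hleft⟩)
    · obtain ⟨_, _, rfl⟩ := hroot.exists_eq_lam
      cases h
    · exact ih hleft

theorem Neutral.hnf {t : CTerm} (h : Neutral t) : t.HNF := by
  rw [CTerm.hnf_iff]
  rintro b _ (hspine | _)
  · exact h.not_cSpine hspine
  · cases h

namespace BigStep

variable {b : Bool} {k : ℕ} {t u : CTerm}

theorem head (h : CHead (BetaRoot b) t u) (hu : BigStep u k) : BigStep t (k + b.toNat) := by
  cases b with
  | false => exact .silent h hu
  | true => exact .inter h hu

@[elab_as_elim]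
theorem head_induction {motive : ∀ t k, BigStep t k → Prop}
    (nf : ∀ {t} (h : t.HNF), motive t 0 (.nf h))
    (head : ∀ {b t u k} (h : CHead (BetaRoot b) t u) (hu : BigStep u k),
      motive u k hu → motive t (k + b.toNat) (hu.head h))
    {t : CTerm} {k : ℕ} (h : BigStep t k) : motive t k h := by
  induction h with
  | nf h => exact nf h
  | silent h hu ih => exact head (b := false) h hu ih
  | inter h hu ih => exact head (b := true) h hu ih

theorem of_silent_steps (h : Relation.ReflTransGen HStepTau t u) (hu : BigStep u k) :
    BigStep t k := by
  induction h using Relation.ReflTransGen.head_induction_on with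
  | refl => exact hu
  | head h _ ih => exact .silent h ih

end BigStep

theorem not_bigStep_of_head_self {b : Bool} {t : CTerm} (h : CHead (BetaRoot b) t t) (k : ℕ) :
    ¬ BigStep t k := by
  intro ht
  induction ht using BigStep.head_induction with
  | nf hnf => exact CTerm.hnf_iff.1 hnf _ _ h
  | head hstep _ ih =>
    obtain ⟨rfl, rfl⟩ := hstep.deterministic h
    exact ih h

/-! ### Silent expansions -/

/-- The terms `t` and `u` agree up to their next head step: both are head normal, or both make a
head step of the same kind into `S`-related terms. -/
inductive HeadMatch (S : CTerm → CTerm → Prop) (t u : CTerm) : Prop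
  | hnf : t.HNF → u.HNF → HeadMatch S t u
  | step {b : Bool} {t' u' : CTerm} :
      CHead (BetaRoot b) t t' → CHead (BetaRoot b) u u' → S t' u' → HeadMatch S t u

/-- The relation `S` is a silent expansion: whenever `S t u`, the term `t` matches the next head
step of `u` after some silent head steps. This is an asymmetric form of weak bisimulation. -/
def IsSilentExpansion (S : CTerm → CTerm → Prop) : Prop :=
  ∀ ⦃t u⦄, S t u → ∃ s, Relation.ReflTransGen HStepTau t s ∧ HeadMatch S s u

namespace IsSilentExpansion

variable {S : CTerm → CTerm → Prop} {t u : CTerm} {k : ℕ}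

theorem bigStep_left (hS : IsSilentExpansion S) (h : S t u) (hu : BigStep u k) :
    BigStep t k := by
  induction hu using BigStep.head_induction generalizing t with
  | nf hnf =>
    obtain ⟨s, hts, hmatch⟩ := hS h
    refine .of_silent_steps hts ?_
    cases hmatch with
    | hnf hs _ => exact .nf hs
    | step _ hstep _ => exact absurd hstep (CTerm.hnf_iff.1 hnf _ _)
  | head hstep _ ih =>
    obtain ⟨s, hts, hmatch⟩ := hS h
    refine .of_silent_steps hts ?_
    cases hmatch with
    | hnf _ hnf => exact absurd hstep (CTerm.hnf_iff.1 hnf _ _)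
    | step hs hu hrel =>
      obtain ⟨rfl, rfl⟩ := hstep.deterministic hu
      exact (ih hrel).head hs

-- A step of `t` may be one of the silent steps towards `s`, after which the terms need not be
-- `S`-related; the induction therefore keeps `s` instead of `S t u`.
theorem bigStep_right_of_headMatch (hS : IsSilentExpansion S) {s : CTerm}
    (hts : Relation.ReflTransGen HStepTau t s) (hmatch : HeadMatch S s u) (ht : BigStep t k) :
    BigStep u k := by
  induction ht using BigStep.head_induction generalizing u s with
  | nf hnf =>
    obtain rfl | ⟨_, hsilent, _⟩ := hts.cases_head
    · cases hmatch with
      | hnf _ hu => exact .nf hu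
      | step hstep _ _ => exact absurd hstep (CTerm.hnf_iff.1 hnf _ _)
    · exact absurd (.inl hsilent) (hnf _)
  | head hstep _ ih =>
    obtain rfl | ⟨_, hsilent, hrest⟩ := hts.cases_head
    · cases hmatch with
      | hnf hnf _ => exact absurd hstep (CTerm.hnf_iff.1 hnf _ _)
      | step hs hu hrel =>
        obtain ⟨rfl, rfl⟩ := hstep.deterministic hs
        obtain ⟨s', hts', hmatch'⟩ := hS hrel
        exact (ih hts' hmatch').head hu
    · obtain ⟨rfl, rfl⟩ := hstep.deterministic (b' := false) hsilent
      exact ih hrest hmatch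

theorem bigStep_iff (hS : IsSilentExpansion S) (h : S t u) : BigStep t k ↔ BigStep u k := by
  refine ⟨fun ht => ?_, hS.bigStep_left h⟩
  obtain ⟨s, hts, hmatch⟩ := hS h
  exact hS.bigStep_right_of_headMatch hts hmatch ht

end IsSilentExpansion

/-! ### Silent standard reduction -/

theorem CSpine.map {R : CTerm → CTerm → Prop} {f : CTerm → CTerm}
    (hroot : ∀ t u, R t u → R (f t) (f u))
    (happ : ∀ p t u, f (.app p t u) = .app p (f t) (f u))
    {t u : CTerm} (h : CSpine R t u) : CSpine R (f t) (f u) := by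
  induction h with
  | root h => exact .root (hroot _ _ h)
  | appL p r _ ih =>
    rw [happ, happ]
    exact .appL p (f r) ih

theorem SilentRoot.liftAt {t u : CTerm} (h : SilentRoot t u) (d : ℕ) :
    SilentRoot (t.liftAt d) (u.liftAt d) := by
  obtain ⟨p, s, r⟩ := h
  rw [CTerm.liftAt_subst_of_ge s r d.zero_le]
  exact .beta p _ _

theorem SilentRoot.subst {t u : CTerm} (h : SilentRoot t u) (x : ℕ) (r : CTerm) :
    SilentRoot (t.subst x r) (u.subst x r) := by
  obtain ⟨p, s, a⟩ := h
  rw [CTerm.subst_subst s a r x.zero_le]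
  exact .beta p _ _

/-- Silent weak head reduction: silent steps on the applicative spine, never under an
abstraction. -/
def SilentSpineSteps : CTerm → CTerm → Prop := Relation.ReflTransGen (CSpine SilentRoot)

namespace SilentSpineSteps

variable {t u s : CTerm}

theorem refl (t : CTerm) : SilentSpineSteps t t := Relation.ReflTransGen.refl

theorem trans (h : SilentSpineSteps t u) (h' : SilentSpineSteps u s) : SilentSpineSteps t s :=
  Relation.ReflTransGen.trans h h'

theorem app (h : SilentSpineSteps t u) (p : Player) (r : CTerm) :
    SilentSpineSteps (.app p t r) (.app p u r) :=
  Relation.ReflTransGen.lift (CTerm.app p · r) (fun _ _ => .appL p r) _ _ h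

theorem liftAt (h : SilentSpineSteps t u) (d : ℕ) :
    SilentSpineSteps (t.liftAt d) (u.liftAt d) :=
  Relation.ReflTransGen.lift (CTerm.liftAt · d)
    (fun _ _ => CSpine.map (f := (CTerm.liftAt · d)) (fun _ _ h => h.liftAt d)
      fun _ _ _ => rfl) _ _ h

theorem subst (h : SilentSpineSteps t u) (x : ℕ) (r : CTerm) :
    SilentSpineSteps (t.subst x r) (u.subst x r) :=
  Relation.ReflTransGen.lift (CTerm.subst · x r)
    (fun _ _ => CSpine.map (f := (CTerm.subst · x r)) (fun _ _ h => h.subst x r)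
      fun _ _ _ => rfl) _ _ h

theorem silent_head_steps (h : SilentSpineSteps t u) : Relation.ReflTransGen HStepTau t u :=
  Relation.ReflTransGen.mono (fun _ _ => CHead.spine) _ _ h

end SilentSpineSteps

/-- Standard silent reduction, after Kashima: silent weak head steps expose the outermost
constructor of the result, then the immediate subterms are reduced in the same way. -/
inductive StandardRed : CTerm → CTerm → Prop
  | var {t : CTerm} {n : ℕ} : SilentSpineSteps t (.var n) → StandardRed t (.var n)
  | lam {t s s' : CTerm} {p : Player} :
      SilentSpineSteps t (.lam p s) → StandardRed s s' → StandardRed t (.lam p s')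
  | app {t s s' r r' : CTerm} {p : Player} :
      SilentSpineSteps t (.app p s r) → StandardRed s s' → StandardRed r r' →
      StandardRed t (.app p s' r')

/-- The terms `t` and `u` have the same kind of spine: two abstractions with related bodies, two
neutral terms, or two terms whose spine steps have the same kind and lead to related terms. -/
inductive SpineMatch (S : CTerm → CTerm → Prop) : CTerm → CTerm → Prop
  | lam {p : Player} {t u : CTerm} : S t u → SpineMatch S (.lam p t) (.lam p u)
  | neutral {t u : CTerm} : Neutral t → Neutral u → SpineMatch S t u
  | step {b : Bool} {t u t' u' : CTerm} :
      CSpine (BetaRoot b) t t' → CSpine (BetaRoot b) u u' → S t' u' → SpineMatch S t u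

namespace StandardRed

variable {t u : CTerm}

theorem refl (t : CTerm) : StandardRed t t := by
  induction t with
  | var n => exact .var (.refl _)
  | lam p t ih => exact .lam (.refl _) ih
  | app p t u iht ihu => exact .app (.refl _) iht ihu

theorem prepend {s : CTerm} (h : SilentSpineSteps t s) (hs : StandardRed s u) :
    StandardRed t u := by
  cases hs with
  | var hvar => exact .var (h.trans hvar)
  | lam hlam hbody => exact .lam (h.trans hlam) hbody
  | app happ hfun harg => exact .app (h.trans happ) hfun harg

theorem liftAt (h : StandardRed t u) (d : ℕ) : StandardRed (t.liftAt d) (u.liftAt d) := by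
  induction h generalizing d with
  | var h => exact prepend (h.liftAt d) (refl _)
  | lam h _ ih => exact .lam (h.liftAt d) (ih _)
  | app h _ _ ihs ihr => exact .app (h.liftAt d) (ihs d) (ihr d)

theorem subst {r r' : CTerm} (h : StandardRed t u) (x : ℕ) (hr : StandardRed r r') :
    StandardRed (t.subst x r) (u.subst x r') := by
  induction h generalizing x r r' with
  | var h =>
    refine prepend (h.subst x r) ?_
    simp only [CTerm.subst]
    split_ifs
    exacts [hr, refl _, refl _]
  | lam h _ ih => exact .lam (h.subst x r) (ih _ (hr.liftAt 0))
  | app h _ _ ihs iha => exact .app (h.subst x r) (ihs x hr) (iha x hr)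

theorem of_stepTau (h : StepTau t u) : StandardRed t u := by
  unfold StepTau at h
  induction h with
  | root h => exact prepend (.single (.root h)) (refl _)
  | lam p _ ih => exact .lam (.refl _) ih
  | appL p r _ ih => exact .app (.refl _) ih (refl r)
  | appR p s _ ih => exact .app (.refl _) (refl s) ih

theorem exists_spineMatch (h : StandardRed t u) :
    ∃ s, SilentSpineSteps t s ∧ SpineMatch StandardRed s u := by
  induction h with
  | @var t n h => exact ⟨_, h, .neutral (.var n) (.var n)⟩
  | lam h hbody => exact ⟨_, h, .lam hbody⟩
  | @app t a a' r r' q h _ hr ih _ =>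
    obtain ⟨s, has, hmatch⟩ := ih
    refine ⟨.app q s r, h.trans (has.app q r), ?_⟩
    cases hmatch with
    | @lam p c c' hbody =>
      have hroot (c r : CTerm) :
          BetaRoot (decide (p ≠ q)) (.app q (.lam p c) r) (c.subst 0 r) :=
        betaRoot_iff.2 ⟨p, q, c, r, rfl, rfl, rfl⟩
      exact .step (.root (hroot c r)) (.root (hroot c' r')) (hbody.subst 0 hr)
    | neutral hs ha' => exact .neutral (hs.app q r) (ha'.app q r')
    | step hs ha' hrel => exact .step (.appL q r hs) (.appL q r' ha') (.app (.refl _) hrel hr)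

theorem headMatch_lam (h : HeadMatch StandardRed t u) (p : Player) :
    HeadMatch StandardRed (.lam p t) (.lam p u) := by
  cases h with
  | hnf ht hu => exact .hnf (ht.lam p) (hu.lam p)
  | step ht hu hrel => exact .step (.lam p ht) (.lam p hu) (.lam (.refl _) hrel)

theorem isSilentExpansion : IsSilentExpansion StandardRed := by
  intro t u h
  obtain ⟨s, hts, hmatch⟩ := h.exists_spineMatch
  cases hmatch with
  | neutral hs hu => exact ⟨s, hts.silent_head_steps, .hnf hs.hnf hu.hnf⟩
  | step hs hu hrel => exact ⟨s, hts.silent_head_steps, .step (.spine hs) (.spine hu) hrel⟩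
  | @lam p a a' hbody =>
    obtain ⟨c, hac, hmatch⟩ := isSilentExpansion hbody
    have hlam : Relation.ReflTransGen HStepTau (.lam p a) (.lam p c) :=
      Relation.ReflTransGen.lift (CTerm.lam p) (fun _ _ => .lam p) _ _ hac
    exact ⟨.lam p c, hts.silent_head_steps.trans hlam, headMatch_lam hmatch p⟩
termination_by _ u => u

end StandardRed

theorem StepTau.bigStep_iff {t u : CTerm} (h : StepTau t u) (k : ℕ) :
    BigStep t k ↔ BigStep u k :=
  StandardRed.isSilentExpansion.bigStep_iff (.of_stepTau h)

/-! ### The preorders on terms -/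

theorem SilentConv.intCtxLe {t u : CTerm} (h : SilentConv t u) : IntCtxLe t u := by
  intro C k ht
  induction h with
  | refl => exact ht
  | tail _ hstep ih =>
    obtain hstep | hstep := hstep
    · exact (StepTau.bigStep_iff (hstep.fill C) k).1 ih
    · exact (StepTau.bigStep_iff (hstep.fill C) k).2 ih

theorem IntCtxLe.impCtxLe {t u : CTerm} (h : IntCtxLe t u) : ImpCtxLe t u :=
  fun C k ht => ⟨k, le_rfl, h C k ht⟩

namespace ImpCtxLe

variable {t u s : CTerm}

theorem refl (t : CTerm) : ImpCtxLe t t := fun _ k ht => ⟨k, le_rfl, ht⟩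

theorem trans (h : ImpCtxLe t u) (h' : ImpCtxLe u s) : ImpCtxLe t s := by
  intro C k ht
  obtain ⟨l, hlk, hu⟩ := h C k ht
  obtain ⟨m, hml, hs⟩ := h' C l hu
  exact ⟨m, hml.trans hlk, hs⟩

theorem fill (h : ImpCtxLe t u) (C : CCtx) : ImpCtxLe (C.fill t) (C.fill u) := by
  intro D k
  simpa only [CCtx.comp_fill] using h (D.comp C) k

end ImpCtxLe

theorem ImpLe.fill {t u : Lam} (h : ImpLe t u) (C : LCtx) : ImpLe (C.fill t) (C.fill u) := by
  simpa only [ImpLe, LCtx.tag_fill] using ImpCtxLe.fill h (C.tag .black)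

theorem LBetaConv.impLe {t u : Lam} (h : LBetaConv t u) : ImpLe t u :=
  (h.silentConv_tag .black).intCtxLe.impCtxLe

/-- The duplicator `δ = λx. x x`. -/
def Lam.delta : Lam := .lam (.app (.var 0) (.var 0))

/-- The diverging term `Ω = δ δ`. -/
def Lam.omega : Lam := .app .delta .delta

theorem Lam.hStepTau_tag_omega (p : Player) : HStepTau (omega.tag p) (omega.tag p) :=
  .spine (.root (.beta p (.app p (.var 0) (.var 0)) (delta.tag p)))

theorem not_impLe_var_omega (n : ℕ) : ¬ ImpLe (.var n) .omega := by
  intro h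
  obtain ⟨k, _, hk⟩ := h .hole 0 (.nf (Neutral.var n).hnf)
  exact not_bigStep_of_head_self (b := false) (Lam.hStepTau_tag_omega .black) k hk

/-- The interaction improvement `⊑int·imp` is a consistent inequational λ-theory:
a compatible preorder containing β-conversion and different from the total relation. -/
theorem impLe_consistent_inequational_theory :
    (∀ t, ImpLe t t) ∧
    (∀ t u s, ImpLe t u → ImpLe u s → ImpLe t s) ∧
    (∀ t u, ImpLe t u → ∀ C : LCtx, ImpLe (C.fill t) (C.fill u)) ∧
    (∀ t u, LBetaConv t u → ImpLe t u) ∧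
    (∃ t u, ¬ ImpLe t u) :=
  ⟨fun _ => ImpCtxLe.refl _,
    fun _ _ _ => ImpCtxLe.trans,
    fun _ _ => ImpLe.fill,
    fun _ _ => LBetaConv.impLe,
    .var 0, .omega, not_impLe_var_omega 0⟩
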